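/- Let M be a compact metric space with a finite good covering 𝒰 = {U_1,…,U_N}, with chosen centers p_j ∈ U_j, and let (ξ_j)_{j=1}^N be the associated Lipschitz partition of unity. Then the map Θ : M → |𝒩_𝒰| defined by Θ(x) = (ξ_1(x), …, ξ_N(x)) is a Lipschitz homotopy equivalence. -/

import Mathlib

open Metric Set

/-- Two maps between metric spaces are *Lipschitz homotopic* if there is a Lipschitz map
`H : X × [0,1] → Y` with `H(·,0) = f` and `H(·,1) = g`. -/
def LipHomotopic {X Y : Type*} [MetricSpace X] [MetricSpace Y] (f g : X → Y) : Prop :=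
  ∃ (H : X × unitInterval → Y) (K : NNReal), LipschitzWith K H ∧
    (∀ x, H (x, 0) = f x) ∧ (∀ x, H (x, 1) = g x)

/-- Two metric spaces are *Lipschitz homotopy equivalent* if there are Lipschitz maps
`f : X → Y` and `g : Y → X` with `g ∘ f` and `f ∘ g` Lipschitz homotopic to identities. -/
def LipHomotopyEquiv (X Y : Type*) [MetricSpace X] [MetricSpace Y] : Prop :=
  ∃ (f : X → Y) (g : Y → X) (Kf Kg : NNReal),
    LipschitzWith Kf f ∧ LipschitzWith Kg g ∧
      LipHomotopic (g ∘ f) id ∧ LipHomotopic (f ∘ g) id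

/-- A subset `V` of a metric space admits a *Lipschitz strong deformation retraction to a
point* `p ∈ V` if there is a Lipschitz `F : V × [0,1] → V` with `F(x,0) = x`, `F(x,1) = p`
and `F(p,t) = p` for all `t`. -/
def IsLipSDRToPoint {X : Type*} [MetricSpace X] (V : Set X) : Prop :=
  ∃ (p : V) (F : V × unitInterval → V) (K : NNReal),
    LipschitzWith K F ∧ (∀ x, F (x, 0) = x) ∧ (∀ x, F (x, 1) = p) ∧ (∀ t, F (p, t) = p)

/-- A locally finite open covering is *good* if closures of its elements are compact and
every nonempty intersection of finitely many elements admits a Lipschitz strong deformation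
retraction to a point. -/
def IsGoodCovering {X : Type*} [MetricSpace X] {J : Type*} (U : J → Set X) : Prop :=
  (∀ j, IsOpen (U j)) ∧ (⋃ j, U j) = univ ∧ LocallyFinite U ∧
    (∀ j, IsCompact (closure (U j))) ∧
    ∀ s : Finset J, s.Nonempty → (⋂ j ∈ s, U j).Nonempty → IsLipSDRToPoint (⋂ j ∈ s, U j)

/-- The geometric realization of the nerve of a finite covering `U : Fin N → Set M`:
the set of `θ : Fin N → ℝ` with values in `[0,1]`, total sum `1`, whose support spans a
simplex of the nerve (i.e. the corresponding intersection is nonempty).  It carries the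
sup metric, induced from the product metric on `Fin N → ℝ`. -/
def NerveSet {M : Type*} [MetricSpace M] {N : ℕ} (U : Fin N → Set M) : Set (Fin N → ℝ) :=
  {θ | (∀ j, θ j ∈ Icc (0:ℝ) 1) ∧ ∑ j, θ j = 1 ∧ (⋂ j ∈ {j | θ j ≠ 0}, U j).Nonempty}

/-- `q` is a *center* of `V`: it belongs to `V` and `V` admits a Lipschitz strong
deformation retraction to `q`. -/
def IsCenter {X : Type*} [MetricSpace X] (V : Set X) (q : X) : Prop :=
  ∃ p : V, (p : X) = q ∧ ∃ (F : V × unitInterval → V) (K : NNReal),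
    LipschitzWith K F ∧ (∀ x, F (x, 0) = x) ∧ (∀ x, F (x, 1) = p) ∧ (∀ t, F (p, t) = p)

/-!
Attach to every simplex `s` of the nerve a Lipschitz contraction of `⋂ j ∈ s, U j`. At a point `θ`
of the nerve, run these contractions in order of decreasing dimension, each for a time measuring
how deep `θ` lies in the open star of the barycenter of `s` in the barycentric subdivision. The
simplices whose star contains `θ` form a chain, so every contraction that is run acts on a point
of its domain; and by the Lebesgue number lemma one of them is always run for the full time, after
which the starting point is forgotten. The endpoint therefore depends only on `θ`, and defines
`ζ`.

Since `ζ (Θ x)` is the endpoint of the flow started at `x`, capping the times by `1 - t` deforms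
`ζ ∘ Θ` to the identity. Conversely, an index `j` whose coordinate `θ j` is nearly maximal belongs
to every simplex that is run at `θ`, so that `ζ θ ∈ U j`. Hence the straight lines from `Θ (ζ θ)`
to the truncation of `θ` to its nearly maximal coordinates, and from there to `θ`, stay in the
nerve.
-/

section Lipschitz

theorem lipschitzWith_pi {X ι : Type*} {Y : ι → Type*} [PseudoEMetricSpace X] [Fintype ι]
    [∀ i, PseudoEMetricSpace (Y i)] {K : NNReal} {f : X → ∀ i, Y i}
    (hf : ∀ i, LipschitzWith K fun x => f x i) : LipschitzWith K f :=
  fun x y => edist_pi_le_iff.2 fun i => hf i x y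

section TotallyBounded

variable {X Y : Type*} [PseudoMetricSpace X] [PseudoMetricSpace Y] {S : Set X} {f : S → Y}
  {K : NNReal} {δ : ℝ}

theorem isBounded_range_of_dist_le (hS : TotallyBounded S) (hδ : 0 < δ)
    (hf : ∀ x y, dist x y ≤ δ → dist (f x) (f y) ≤ K * dist x y) :
    Bornology.IsBounded (range f) := by
  obtain ⟨T, hT, hcover⟩ := totallyBounded_iff.1
    (totallyBounded_preimage isUniformEmbedding_subtype_val.isUniformInducing hS) δ hδ
  refine ((Bornology.isBounded_biUnion hT).2 fun y _ =>
    isBounded_closedBall (x := f y) (r := K * δ)).subset ?_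
  rintro _ ⟨x, rfl⟩
  obtain ⟨y, hy, hxy⟩ := mem_iUnion₂.1 (hcover x.2)
  refine mem_iUnion₂.2 ⟨y, hy, (hf x y hxy.le).trans ?_⟩
  gcongr
  exact hxy.le

theorem exists_lipschitzWith_of_dist_le (hS : TotallyBounded S) (hδ : 0 < δ)
    (hf : ∀ x y, dist x y ≤ δ → dist (f x) (f y) ≤ K * dist x y) :
    ∃ K', LipschitzWith K' f := by
  refine ⟨_, LipschitzWith.of_dist_le' (K := K + diam (range f) / δ) fun x y => ?_⟩
  rw [add_mul]
  rcases le_total (dist x y) δ with hxy | hxy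
  · exact (hf x y hxy).trans (le_add_of_nonneg_right (by positivity))
  · calc dist (f x) (f y) ≤ diam (range f) :=
          dist_le_diam_of_mem (isBounded_range_of_dist_le hS hδ hf) (mem_range_self x)
            (mem_range_self y)
      _ = diam (range f) / δ * δ := (div_mul_cancel₀ _ hδ.ne').symm
      _ ≤ diam (range f) / δ * dist x y := by gcongr
      _ ≤ K * dist x y + diam (range f) / δ * dist x y := le_add_of_nonneg_left (by positivity)

end TotallyBounded

theorem lipschitzWith_div_of_abs_le {X : Type*} [PseudoMetricSpace X] {f g : X → ℝ}
    {Kf Kg c : NNReal} (hf : LipschitzWith Kf f) (hg : LipschitzWith Kg g)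
    (hfg : ∀ x, |f x| ≤ g x) (hc : 0 < c) (hcg : ∀ x, c ≤ g x) :
    LipschitzWith ((Kf + Kg) / c) fun x => f x / g x := by
  refine LipschitzWith.of_dist_le_mul fun x y => ?_
  have hpos : ∀ z, 0 < g z := fun z => (NNReal.coe_pos.2 hc).trans_le (hcg z)
  have hquot : |f y / g y| ≤ 1 := by
    rw [abs_div, abs_of_pos (hpos y)]
    exact div_le_one_of_le₀ (hfg y) (hpos y).le
  have hsplit : f x / g x - f y / g y = ((f x - f y) - f y / g y * (g x - g y)) / g x := by
    have := (hpos x).ne'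
    have := (hpos y).ne'
    field_simp
    ring
  have hnum : |(f x - f y) - f y / g y * (g x - g y)| ≤ (Kf + Kg) * dist x y :=
    calc |(f x - f y) - f y / g y * (g x - g y)|
        ≤ |f x - f y| + |f y / g y| * |g x - g y| := by
          simpa only [abs_mul] using abs_sub (f x - f y) (f y / g y * (g x - g y))
      _ ≤ Kf * dist x y + 1 * (Kg * dist x y) := by
          gcongr
          · exact hf.dist_le_mul x y
          · exact hg.dist_le_mul x y
      _ = (Kf + Kg) * dist x y := by ring
  calc dist (f x / g x) (f y / g y)
      = |(f x - f y) - f y / g y * (g x - g y)| / g x := by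
        rw [Real.dist_eq, hsplit, abs_div, abs_of_pos (hpos x)]
    _ ≤ (Kf + Kg) * dist x y / c := div_le_div₀ (by positivity) hnum (by positivity) (hcg x)
    _ = ((Kf + Kg) / c : NNReal) * dist x y := by push_cast; ring

theorem lipschitzWith_ite_le_unitInterval {X Y : Type*} [PseudoMetricSpace X]
    [PseudoMetricSpace Y] {f g : X × unitInterval → Y} {Kf Kg : NNReal}
    (hf : LipschitzWith Kf f) (hg : LipschitzWith Kg g) (c : unitInterval)
    (hfg : ∀ x, f (x, c) = g (x, c)) :
    LipschitzWith (Kf + Kg) fun q => if q.2 ≤ c then f q else g q := by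
  have hmixed (x y : X) (s t : unitInterval) (hs : s ≤ c) (ht : c ≤ t) :
      dist (f (x, s)) (g (y, t)) ≤ (Kf + Kg) * dist (x, s) (y, t) := by
    have hsc : dist s c ≤ dist s t := Real.dist_left_le_of_mem_uIcc (Icc_subset_uIcc ⟨hs, ht⟩)
    have hct : dist c t ≤ dist s t := Real.dist_right_le_of_mem_uIcc (Icc_subset_uIcc ⟨hs, ht⟩)
    calc dist (f (x, s)) (g (y, t))
        ≤ dist (f (x, s)) (f (y, c)) + dist (g (y, c)) (g (y, t)) := by
          rw [← hfg]; exact dist_triangle _ _ _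
      _ ≤ Kf * dist (x, s) (y, t) + Kg * dist (x, s) (y, t) := by
          refine add_le_add (hf.dist_le_mul_of_le (max_le_max le_rfl hsc))
            (hg.dist_le_mul_of_le ?_)
          rw [dist_prod_same_left]
          exact hct.trans (le_max_right _ _)
      _ = (Kf + Kg) * dist (x, s) (y, t) := by ring
  refine LipschitzWith.of_dist_le_mul fun ⟨x, s⟩ ⟨y, t⟩ => ?_
  rw [NNReal.coe_add]
  by_cases hs : s ≤ c <;> by_cases ht : t ≤ c <;> simp only [hs, ht, if_true, if_false]
  · refine (hf.dist_le_mul _ _).trans ?_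
    gcongr
    exact le_add_of_nonneg_right Kg.2
  · exact hmixed x y s t hs (le_of_not_ge ht)
  · rw [dist_comm, dist_comm (x, s)]
    exact hmixed y x t s ht (le_of_not_ge hs)
  · refine (hg.dist_le_mul _ _).trans ?_
    gcongr
    exact le_add_of_nonneg_left Kf.2

end Lipschitz

namespace LipHomotopic

theorem trans {X Y : Type*} [MetricSpace X] [MetricSpace Y] {f g h : X → Y}
    (hfg : LipHomotopic f g) (hgh : LipHomotopic g h) : LipHomotopic f h := by
  obtain ⟨F, KF, hF, hF0, hF1⟩ := hfg
  obtain ⟨G, KG, hG, hG0, hG1⟩ := hgh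
  have hspeed (b : ℝ) : LipschitzWith 2 fun t : unitInterval =>
      projIcc (0 : ℝ) 1 zero_le_one (2 * t - b) := by
    refine LipschitzWith.of_dist_le_mul fun s t => ?_
    refine ((LipschitzWith.projIcc zero_le_one).dist_le_mul _ _).trans_eq ?_
    simp [Subtype.dist_eq, Real.dist_eq, ← mul_sub, abs_mul]
  have hreparam (b : ℝ) := LipschitzWith.prod_fst (α := X).prodMk
    ((hspeed b).comp LipschitzWith.prod_snd)
  refine ⟨_, _, lipschitzWith_ite_le_unitInterval (hF.comp (hreparam 0)) (hG.comp (hreparam 1))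
    ⟨1 / 2, by norm_num, by norm_num⟩ fun x => ?_, fun x => ?_, fun x => ?_⟩
  · simp [hF1, hG0]
  · simp [hF0]
  · rw [if_neg (by simp [← Subtype.coe_le_coe]; norm_num)]
    simpa [show (2 : ℝ) - 1 = 1 by norm_num] using hG1 x

theorem of_segment_subset {X E : Type*} [MetricSpace X] [NormedAddCommGroup E] [NormedSpace ℝ E]
    {C : Set E} (hC : Bornology.IsBounded C) {f g : X → C} {Kf Kg : NNReal}
    (hf : LipschitzWith Kf f) (hg : LipschitzWith Kg g)
    (hfg : ∀ x, segment ℝ (f x : E) (g x) ⊆ C) : LipHomotopic f g := by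
  let line (x : X) (t : unitInterval) : E := AffineMap.lineMap (f x : E) (g x) (t : ℝ)
  have hspace (t : unitInterval) : LipschitzWith (Kf + Kg) fun x => line x t := by
    refine LipschitzWith.of_dist_le_mul fun x y => ?_
    calc dist (line x t) (line y t)
        = ‖(1 - (t : ℝ)) • ((f x : E) - f y) + (t : ℝ) • ((g x : E) - g y)‖ := by
          simp only [line, dist_eq_norm, AffineMap.lineMap_apply_module]
          congr 1
          module
      _ ≤ (1 - t) * dist (f x) (f y) + t * dist (g x) (g y) := by
          refine (norm_add_le _ _).trans_eq ?_
          rw [norm_smul, norm_smul, Real.norm_of_nonneg t.2.1,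
            Real.norm_of_nonneg (sub_nonneg.2 t.2.2), Subtype.dist_eq, Subtype.dist_eq,
            dist_eq_norm, dist_eq_norm]
      _ ≤ 1 * (Kf * dist x y) + 1 * (Kg * dist x y) := by
          gcongr
          · exact sub_le_self _ t.2.1
          · exact hf.dist_le_mul x y
          · exact t.2.2
          · exact hg.dist_le_mul x y
      _ = (Kf + Kg : NNReal) * dist x y := by push_cast; ring
  have htime (x : X) : LipschitzWith (diam C).toNNReal (line x) := by
    refine LipschitzWith.of_dist_le' fun s t => ?_
    rw [dist_lineMap_lineMap, mul_comm]
    gcongr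
    · exact dist_le_diam_of_mem hC (f x).2 (g x).2
    · rfl
  have hline (x : X) (t : unitInterval) : line x t ∈ C :=
    hfg x (lineMap_mem_segment ℝ _ _ t.2)
  exact ⟨fun q => ⟨line q.1 q.2, hline q.1 q.2⟩, _,
    (LipschitzWith.uncurry hspace htime).subtype_mk _,
    fun x => Subtype.ext (by simp [line]), fun x => Subtype.ext (by simp [line])⟩

end LipHomotopic

/-- `V` is contractible within itself by a Lipschitz homotopy. -/
def IsLipContractible {X : Type*} [MetricSpace X] (V : Set X) : Prop :=
  ∃ q : V, LipHomotopic (id : V → V) (Function.const V q)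

theorem IsLipSDRToPoint.isLipContractible {X : Type*} [MetricSpace X] {V : Set X}
    (hV : IsLipSDRToPoint V) : IsLipContractible V := by
  obtain ⟨q, F, K, hF, hF0, hF1, -⟩ := hV
  exact ⟨q, F, K, hF, hF0, hF1⟩

/-- A Lipschitz contraction of `V` encoded as a total map on `M × [0,1]`; the Lipschitz bound also
compares points of `V` with points of `M` that stand still at time `0`. -/
structure LocalContraction {M : Type*} [PseudoMetricSpace M] (V : Set M) where
  toFun : M × unitInterval → M
  const : NNReal
  center : M
  lipschitzOnWith : LipschitzOnWith const toFun {q | q.2 ≠ 0 → q.1 ∈ V}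
  map_zero : ∀ x, toFun (x, 0) = x
  map_one : ∀ x ∈ V, toFun (x, 1) = center
  map_mem : ∀ x ∈ V, ∀ t, toFun (x, t) ∈ V

section ExtendHomotopy

variable {M : Type*} {V : Set M} {F : V × unitInterval → V}

open scoped Classical in
/-- The extension of a homotopy of `V` to all of `M` by the stationary homotopy outside `V`. -/
noncomputable def extendHomotopy (F : V × unitInterval → V) (q : M × unitInterval) : M :=
  if hq : q.1 ∈ V then F (⟨q.1, hq⟩, q.2) else q.1

theorem extendHomotopy_of_mem {x : M} (hx : x ∈ V) (t : unitInterval) :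
    extendHomotopy F (x, t) = F (⟨x, hx⟩, t) :=
  dif_pos hx

theorem extendHomotopy_of_notMem {x : M} (hx : x ∉ V) (t : unitInterval) :
    extendHomotopy F (x, t) = x :=
  dif_neg hx

theorem extendHomotopy_zero (hF0 : ∀ x, F (x, 0) = x) (x : M) : extendHomotopy F (x, 0) = x := by
  by_cases hx : x ∈ V
  · rw [extendHomotopy_of_mem hx, hF0]
  · exact extendHomotopy_of_notMem hx 0

variable [PseudoMetricSpace M]

theorem dist_extendHomotopy_le {K : NNReal} (hF : LipschitzWith K F) (hF0 : ∀ x, F (x, 0) = x)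
    {x : M} (hx : x ∈ V) (t : unitInterval) (y : M) :
    dist (extendHomotopy F (x, t)) y ≤ (K + 1) * dist (x, t) (y, 0) :=
  calc dist (extendHomotopy F (x, t)) y
      ≤ dist (F (⟨x, hx⟩, t)) (F (⟨x, hx⟩, 0)) + dist x y := by
        rw [extendHomotopy_of_mem hx, hF0]
        exact dist_triangle _ x y
    _ ≤ K * dist (x, t) (y, 0) + dist (x, t) (y, 0) := by
        refine add_le_add (hF.dist_le_mul_of_le ?_) (le_max_left _ _)
        rw [dist_prod_same_left]
        exact le_max_right _ _
    _ = (K + 1) * dist (x, t) (y, 0) := by ring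

theorem lipschitzOnWith_extendHomotopy {K : NNReal} (hF : LipschitzWith K F)
    (hF0 : ∀ x, F (x, 0) = x) :
    LipschitzOnWith (K + 1) (extendHomotopy F) {q | q.2 ≠ 0 → q.1 ∈ V} := by
  refine LipschitzOnWith.of_dist_le_mul ?_
  rintro ⟨x, t⟩ hxt ⟨y, s⟩ hys
  rw [NNReal.coe_add, NNReal.coe_one]
  by_cases hx : x ∈ V
  · by_cases hy : y ∈ V
    · rw [extendHomotopy_of_mem hx, extendHomotopy_of_mem hy]
      refine (hF.dist_le_mul (⟨x, hx⟩, t) (⟨y, hy⟩, s)).trans ?_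
      exact mul_le_mul_of_nonneg_right (le_add_of_nonneg_right zero_le_one) dist_nonneg
    · obtain rfl : s = 0 := of_not_not (mt hys hy)
      rw [extendHomotopy_of_notMem hy]
      exact dist_extendHomotopy_le hF hF0 hx t y
  · obtain rfl : t = 0 := of_not_not (mt hxt hx)
    rw [extendHomotopy_of_notMem hx, dist_comm, dist_comm (x, _)]
    by_cases hy : y ∈ V
    · exact dist_extendHomotopy_le hF hF0 hy s x
    · rw [extendHomotopy_of_notMem hy]
      have hdist : dist y x ≤ dist (y, s) (x, (0 : unitInterval)) := le_max_left _ _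
      exact hdist.trans (le_mul_of_one_le_left dist_nonneg (le_add_of_nonneg_left K.2))

end ExtendHomotopy

theorem IsLipContractible.nonempty_localContraction {M : Type*} [MetricSpace M] {V : Set M}
    (hV : IsLipContractible V) : Nonempty (LocalContraction V) := by
  obtain ⟨c, F, K, hF, hF0, hF1⟩ := hV
  exact ⟨{
    toFun := extendHomotopy F
    const := K + 1
    center := c
    lipschitzOnWith := lipschitzOnWith_extendHomotopy hF hF0
    map_zero := extendHomotopy_zero hF0
    map_one := fun x hx => by rw [extendHomotopy_of_mem hx, hF1, Function.const_apply]
    map_mem := fun x hx t => by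
      rw [extendHomotopy_of_mem hx]
      exact Subtype.coe_prop _ }⟩

namespace LocalContraction

variable {M S : Type*} [PseudoMetricSpace M] {V : S → Set M}

/-- The composite of the contractions `G σ`, for `σ` running through a list, applied to the point
`q.1` with contraction times `q.2`. -/
def flow (G : ∀ σ, LocalContraction (V σ)) : List S → M × (S → unitInterval) → M
  | [], q => q.1
  | σ :: l, q => flow G l ((G σ).toFun (q.1, q.2 σ), q.2)

variable (V) in
/-- The pairs of a point and contraction times for which every contraction in `flow` acts on a point
of its domain: among the `V σ` with nonzero time, those met earlier along the list are smaller. -/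
def flowDomain (l : List S) : Set (M × (S → unitInterval)) :=
  {q | l.Pairwise (fun σ ρ => q.2 σ ≠ 0 → q.2 ρ ≠ 0 → V σ ⊆ V ρ) ∧
    ∀ σ ∈ l, q.2 σ ≠ 0 → q.1 ∈ V σ}

variable (G : ∀ σ, LocalContraction (V σ)) {l : List S} {q : M × (S → unitInterval)}

theorem flowStep_mem_flowDomain {σ : S} (hq : q ∈ flowDomain V (σ :: l)) :
    ((G σ).toFun (q.1, q.2 σ), q.2) ∈ flowDomain V l := by
  obtain ⟨hchain, hmem⟩ := hq
  rw [List.pairwise_cons] at hchain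
  refine ⟨hchain.2, fun ρ hρ hρ0 => ?_⟩
  change (G σ).toFun (q.1, q.2 σ) ∈ V ρ
  by_cases hσ : q.2 σ = 0
  · rw [hσ, (G σ).map_zero]
    exact hmem ρ (List.mem_cons_of_mem σ hρ) hρ0
  · exact hchain.1 ρ hρ hσ hρ0 ((G σ).map_mem _ (hmem σ List.mem_cons_self hσ) _)

theorem flow_mem {W : Set M} (hq : q ∈ flowDomain V l) (hV : ∀ σ ∈ l, q.2 σ ≠ 0 → V σ ⊆ W)
    (hW : q.1 ∈ W) : flow G l q ∈ W := by
  induction l generalizing q with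
  | nil => exact hW
  | cons σ l ih =>
    refine ih (flowStep_mem_flowDomain G hq) (fun ρ hρ => hV ρ (List.mem_cons_of_mem σ hρ)) ?_
    by_cases hσ : q.2 σ = 0
    · simpa only [hσ, (G σ).map_zero] using hW
    · exact hV σ List.mem_cons_self hσ
        ((G σ).map_mem _ (hq.2 σ List.mem_cons_self hσ) _)

theorem flow_of_forall_eq_zero (l : List S) (hq : ∀ σ, q.2 σ = 0) : flow G l q = q.1 := by
  induction l generalizing q with
  | nil => rfl
  | cons σ l ih =>
    rw [flow, hq, (G σ).map_zero]
    exact ih hq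

variable [Fintype S]

theorem exists_lipschitzOnWith_flow (l : List S) :
    ∃ K, LipschitzOnWith K (flow G l) (flowDomain V l) := by
  induction l with
  | nil => exact ⟨1, LipschitzWith.prod_fst.lipschitzOnWith⟩
  | cons σ l ih =>
    obtain ⟨K, hK⟩ := ih
    have hinput := LipschitzWith.prod_fst.prodMk
      ((LipschitzWith.eval (α := fun _ => unitInterval) σ).comp (LipschitzWith.prod_snd (α := M)))
    have hpoint := (G σ).lipschitzOnWith.comp (hinput.lipschitzOnWith (s := flowDomain V (σ :: l)))
      fun q hq => hq.2 σ List.mem_cons_self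
    exact ⟨_, hK.comp (hpoint.prodMk LipschitzWith.prod_snd.lipschitzOnWith)
      fun q hq => flowStep_mem_flowDomain G hq⟩

/-- A contraction applied for the full time `1` forgets the point it is applied to. -/
theorem exists_dist_flow_le (l : List S) :
    ∃ K : NNReal, ∀ q ∈ flowDomain V l, ∀ q' ∈ flowDomain V l,
      (∃ σ ∈ l, q.2 σ = 1 ∧ q'.2 σ = 1) → dist (flow G l q) (flow G l q') ≤ K * dist q.2 q'.2 := by
  induction l with
  | nil => simp
  | cons σ l ih =>
    obtain ⟨K, hK⟩ := exists_lipschitzOnWith_flow G l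
    obtain ⟨K', hK'⟩ := ih
    refine ⟨max K K', fun q hq q' hq' ⟨ρ, hρ, hqρ, hqρ'⟩ => ?_⟩
    have hstep := flowStep_mem_flowDomain G hq
    have hstep' := flowStep_mem_flowDomain G hq'
    rcases List.mem_cons.1 hρ with rfl | hρ
    · have hcenter {q : M × (S → unitInterval)} (hq : q ∈ flowDomain V (ρ :: l))
          (hqρ : q.2 ρ = 1) : (G ρ).toFun (q.1, q.2 ρ) = (G ρ).center := by
        rw [hqρ]
        exact (G ρ).map_one _ (hq.2 ρ List.mem_cons_self (by simp [hqρ]))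
      have hdist := hK.dist_le_mul _ hstep _ hstep'
      rw [hcenter hq hqρ, hcenter hq' hqρ', dist_prod_same_left] at hdist
      rw [flow, flow, hcenter hq hqρ, hcenter hq' hqρ']
      exact hdist.trans (by gcongr; exact le_max_left K K')
    · refine (hK' _ hstep _ hstep' ⟨ρ, hρ, hqρ, hqρ'⟩).trans ?_
      gcongr
      exact le_max_right K K'

end LocalContraction

section BarycentricStar

variable {ι : Type*}

/-- The open star of the barycenter of the face `s` in the barycentric subdivision of the standard
simplex, extended to all of `ι → ℝ`. -/
def barycentricStar (s : Finset ι) : Set (ι → ℝ) :=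
  {θ | ∀ i ∈ s, 0 < θ i ∧ ∀ j ∉ s, θ j < θ i}

theorem subset_of_mem_barycentricStar {s t : Finset ι} {θ : ι → ℝ} (hs : θ ∈ barycentricStar s)
    (ht : θ ∈ barycentricStar t) (hcard : t.card ≤ s.card) : t ⊆ s := by
  by_contra hts
  obtain ⟨i, hit, his⟩ := Finset.not_subset.1 hts
  have hst : s ⊆ t := fun j hj => by
    by_contra hjt
    exact ((ht i hit).2 j hjt).not_gt ((hs j hj).2 i his)
  exact hts (Finset.eq_of_subset_of_card_le hst hcard).superset

theorem isOpen_barycentricStar [Finite ι] (s : Finset ι) : IsOpen (barycentricStar s) := by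
  simp only [barycentricStar, ofPred_forall, ofPred_and]
  exact isOpen_biInter_finset fun i _ => (isOpen_lt continuous_const (continuous_apply i)).inter <|
    isOpen_iInter_of_finite fun j => isOpen_iInter_of_finite fun _ =>
      isOpen_lt (continuous_apply j) (continuous_apply i)

variable [Fintype ι]

theorem exists_pos_of_mem_stdSimplex {θ : ι → ℝ} (hθ : θ ∈ stdSimplex ℝ ι) : ∃ i, 0 < θ i := by
  simpa using Finset.exists_lt_of_sum_lt (s := Finset.univ) (f := 0) (g := θ) (by simp [hθ.2])

/-- The time for which the contraction attached to the face `s` is run at `θ`: it vanishes unless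
`θ` lies `δ`-deep inside the star of `s`, and it is `1` once `θ` lies `2δ`-deep inside. -/
noncomputable def starTime (δ : ℝ) (s : Finset ι) (θ : ι → ℝ) : unitInterval :=
  projIcc 0 1 zero_le_one (infDist θ (barycentricStar s)ᶜ / δ - 1)

theorem lipschitzWith_starTime (δ : NNReal) (s : Finset ι) : LipschitzWith δ⁻¹ (starTime δ s) := by
  refine LipschitzWith.of_dist_le_mul fun θ η => ?_
  refine ((LipschitzWith.projIcc zero_le_one).dist_le_mul _ _).trans ?_
  have hdist := (lipschitz_infDist_pt (barycentricStar s)ᶜ).dist_le_mul θ η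
  rw [NNReal.coe_one, one_mul] at hdist ⊢
  rw [dist_sub_right, Real.dist_eq, ← sub_div, abs_div, NNReal.abs_eq, div_eq_inv_mul,
    NNReal.coe_inv]
  gcongr
  exact hdist

variable {δ : ℝ} {s : Finset ι} {θ : ι → ℝ}

theorem starTime_eq_one (hδ : 0 < δ) (h : 2 * δ ≤ infDist θ (barycentricStar s)ᶜ) :
    starTime δ s θ = 1 :=
  projIcc_of_right_le _ (by rw [le_sub_iff_add_le, le_div_iff₀ hδ]; linarith)

theorem lt_infDist_of_starTime_ne_zero (hδ : 0 < δ) (h : starTime δ s θ ≠ 0) :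
    δ < infDist θ (barycentricStar s)ᶜ := by
  contrapose! h
  exact projIcc_of_le_left _ (by rwa [sub_nonpos, div_le_one hδ])

theorem mem_barycentricStar_of_starTime_ne_zero (hδ : 0 < δ) (h : starTime δ s θ ≠ 0) :
    θ ∈ barycentricStar s := by
  by_contra hθ
  have := lt_infDist_of_starTime_ne_zero hδ h
  rw [infDist_zero_of_mem hθ] at this
  exact hδ.not_gt this

theorem add_le_of_starTime_ne_zero (hδ : 0 < δ) (h : starTime δ s θ ≠ 0) {i j : ι} (hi : i ∈ s)
    (hj : j ∉ s) : θ j + δ ≤ θ i := by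
  classical
  have hij : θ j < θ i := ((mem_barycentricStar_of_starTime_ne_zero hδ h) i hi).2 j hj
  have hupdate : Function.update θ j (θ i) ∉ barycentricStar s := fun hmem => by
    have := (hmem i hi).2 j hj
    rw [Function.update_self, Function.update_of_ne (ne_of_mem_of_not_mem hi hj)] at this
    exact this.false
  have hdist : dist θ (Function.update θ j (θ i)) ≤ θ i - θ j := by
    refine (dist_pi_le_iff (sub_nonneg.2 hij.le)).2 fun k => ?_
    rcases eq_or_ne k j with rfl | hk
    · rw [Function.update_self, dist_comm, Real.dist_eq, abs_of_pos (sub_pos.2 hij)]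
    · rw [Function.update_of_ne hk, dist_self]
      exact sub_nonneg.2 hij.le
  have hinfDist := (infDist_le_dist_of_mem (mem_compl hupdate)).trans hdist
  linarith [lt_infDist_of_starTime_ne_zero hδ h]

theorem exists_forall_dist_le_starTime_eq_one (ι : Type*) [Fintype ι] :
    ∃ δ : NNReal, 0 < δ ∧ ∀ θ ∈ stdSimplex ℝ ι, ∃ s : Finset ι, s.Nonempty ∧
      ∀ η, dist η θ ≤ δ → starTime δ s η = 1 := by
  have hcover : stdSimplex ℝ ι ⊆ ⋃ s : {s : Finset ι // s.Nonempty}, barycentricStar s.1 := by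
    intro θ hθ
    obtain ⟨i, hi⟩ := exists_pos_of_mem_stdSimplex hθ
    refine mem_iUnion.2 ⟨⟨Finset.univ.filter fun i => 0 < θ i, i, by simpa⟩, fun i hi => ?_⟩
    simp only [Finset.mem_filter, Finset.mem_univ, true_and] at hi ⊢
    exact ⟨hi, fun j hj => (not_lt.1 hj).trans_lt hi⟩
  obtain ⟨ε, hε, hball⟩ := lebesgue_number_lemma_of_metric (isCompact_stdSimplex ℝ ι)
    (fun s : {s : Finset ι // s.Nonempty} => isOpen_barycentricStar s.1) hcover
  lift ε to NNReal using hε.le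
  have hδ : 0 < ε / 3 := div_pos (NNReal.coe_pos.1 hε) three_pos
  refine ⟨ε / 3, hδ, fun θ hθ => ?_⟩
  obtain ⟨⟨s, hs⟩, hθs⟩ := hball θ hθ
  refine ⟨s, hs, fun η hη => starTime_eq_one (NNReal.coe_pos.2 hδ) ?_⟩
  have hzero : (0 : ι → ℝ) ∉ barycentricStar s := fun h =>
    let ⟨i, hi⟩ := hs
    (h i hi).1.false
  refine (le_infDist ⟨0, hzero⟩).2 fun ρ hρ => ?_
  by_contra! hηρ
  refine hρ (hθs ?_)
  push_cast at hη hηρ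
  rw [mem_ball]
  linarith [dist_triangle_left ρ θ η, dist_comm η θ]

end BarycentricStar

section SumNormalize

variable {ι : Type*} [Fintype ι]

/-- The function `f` rescaled to have total sum `1`; it is `0` if `f` has sum `0`. -/
noncomputable def sumNormalize (f : ι → ℝ) : ι → ℝ :=
  fun j => f j / ∑ i, f i

theorem sumNormalize_mem_stdSimplex {f : ι → ℝ} (hf : ∀ j, 0 ≤ f j) (hsum : 0 < ∑ i, f i) :
    sumNormalize f ∈ stdSimplex ℝ ι :=
  ⟨fun j => div_nonneg (hf j) hsum.le, by
    simp only [sumNormalize, ← Finset.sum_div, div_self hsum.ne']⟩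

theorem exists_lipschitzWith_sumNormalize {X : Type*} [PseudoMetricSpace X] {f : X → ι → ℝ}
    {K c : NNReal} (hf : LipschitzWith K f) (hf0 : ∀ x j, 0 ≤ f x j) (hc : 0 < c)
    (hsum : ∀ x, c ≤ ∑ i, f x i) : ∃ K', LipschitzWith K' fun x => sumNormalize (f x) := by
  have hcoord (j : ι) : LipschitzWith K fun x => f x j :=
    LipschitzWith.of_dist_le_mul fun x y => (dist_le_pi_dist _ _ j).trans (hf.dist_le_mul x y)
  have hsumLip : LipschitzWith (∑ _i : ι, K) fun x => ∑ i, f x i :=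
    LipschitzWith.of_dist_le_mul fun x y => by
      push_cast
      rw [Finset.sum_mul]
      exact dist_sum_sum_le_of_le _ fun i _ => (hcoord i).dist_le_mul x y
  exact ⟨_, lipschitzWith_pi fun j => lipschitzWith_div_of_abs_le (hcoord j) hsumLip
    (fun x => (abs_of_nonneg (hf0 x j)).trans_le
      (Finset.single_le_sum (fun i _ => hf0 x i) (Finset.mem_univ j))) hc hsum⟩

/-- The normalized truncation of a point of the standard simplex to its coordinates that are within
`δ` of the largest one, which is `‖θ‖` for the sup norm. -/
noncomputable def peak (δ : ℝ) (θ : ι → ℝ) : ι → ℝ :=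
  sumNormalize fun j => max 0 (θ j - ‖θ‖ + δ)

theorem le_sum_max_sub_norm_add (δ : ℝ) {θ : ι → ℝ} (hθ : θ ∈ stdSimplex ℝ ι) :
    δ ≤ ∑ j, max 0 (θ j - ‖θ‖ + δ) := by
  have : Nonempty ι := (exists_pos_of_mem_stdSimplex hθ).nonempty
  obtain ⟨j, hj⟩ := Finite.exists_max θ
  have hnorm : ‖θ‖ ≤ θ j :=
    (pi_norm_le_iff_of_nonneg (hθ.1 j)).2 fun k => by
      rw [Real.norm_of_nonneg (hθ.1 k)]
      exact hj k
  calc δ ≤ max 0 (θ j - ‖θ‖ + δ) := le_max_of_le_right (by linarith)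
    _ ≤ ∑ j, max 0 (θ j - ‖θ‖ + δ) :=
        Finset.single_le_sum (f := fun j => max 0 (θ j - ‖θ‖ + δ)) (fun _ _ => le_max_left _ _)
          (Finset.mem_univ j)

theorem peak_mem_stdSimplex {δ : ℝ} (hδ : 0 < δ) {θ : ι → ℝ} (hθ : θ ∈ stdSimplex ℝ ι) :
    peak δ θ ∈ stdSimplex ℝ ι :=
  sumNormalize_mem_stdSimplex (fun _ => le_max_left _ _)
    (hδ.trans_le (le_sum_max_sub_norm_add δ hθ))

theorem exists_lipschitzWith_peak {δ : NNReal} (hδ : 0 < δ) :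
    ∃ K, LipschitzWith K fun θ : stdSimplex ℝ ι => peak δ (θ : ι → ℝ) := by
  refine exists_lipschitzWith_sumNormalize (K := 2) (lipschitzWith_pi fun j => ?_)
    (fun _ _ => le_max_left _ _) hδ fun θ => le_sum_max_sub_norm_add _ θ.2
  refine LipschitzWith.const_max (LipschitzWith.of_dist_le_mul fun θ η => ?_) 0
  rw [dist_add_right]
  calc dist ((θ : ι → ℝ) j - ‖(θ : ι → ℝ)‖) ((η : ι → ℝ) j - ‖(η : ι → ℝ)‖)
      ≤ dist ((θ : ι → ℝ) j) ((η : ι → ℝ) j) + dist ‖(θ : ι → ℝ)‖ ‖(η : ι → ℝ)‖ :=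
        dist_sub_sub_le _ _ _ _
    _ ≤ dist θ η + dist θ η :=
        add_le_add (dist_le_pi_dist _ _ j)
          ((dist_norm_norm_le _ _).trans_eq (dist_eq_norm _ _).symm)
    _ = (2 : NNReal) * dist θ η := (two_mul _).symm

theorem mem_of_peak_ne_zero {δ : ℝ} (hδ : 0 < δ) {s : Finset ι} (hs : s.Nonempty) {θ : ι → ℝ}
    (hθ : starTime δ s θ ≠ 0) {j : ι} (hj : peak δ θ j ≠ 0) : j ∈ s := by
  by_contra hjs
  obtain ⟨i, hi⟩ := hs
  refine hj ?_
  have hgap := add_le_of_starTime_ne_zero hδ hθ hi hjs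
  have hnorm := (le_abs_self _).trans (norm_le_pi_norm θ i)
  rw [peak, sumNormalize, max_eq_left (by linarith), zero_div]

end SumNormalize

section Nerve

/-- The intersection of the members of `U` indexed by the support of `θ`. -/
def supportInter {M ι : Type*} (U : ι → Set M) (θ : ι → ℝ) : Set M :=
  {x | ∀ j, θ j ≠ 0 → x ∈ U j}

/-- The simplices of the nerve of `U`: finite index sets whose members of `U` meet. -/
abbrev NerveSimplex {M ι : Type*} (U : ι → Set M) : Type _ :=
  {s : Finset ι // s.Nonempty ∧ (⋂ j ∈ s, U j).Nonempty}

noncomputable instance {M ι : Type*} [Finite ι] (U : ι → Set M) : Fintype (NerveSimplex U) :=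
  Fintype.ofFinite _

/-- The simplices of the nerve in order of decreasing dimension, so that the corresponding
intersections increase along every chain of simplices. -/
noncomputable def sortedSimplices {M ι : Type*} [Finite ι] (U : ι → Set M) :
    List (NerveSimplex U) :=
  Finset.univ.toList.insertionSort fun s t => t.1.card ≤ s.1.card

variable {M ι : Type*} {U : ι → Set M}

theorem mem_sortedSimplices [Finite ι] (s : NerveSimplex U) : s ∈ sortedSimplices U := by
  simp [sortedSimplices]

theorem pairwise_sortedSimplices [Finite ι] (U : ι → Set M) :
    (sortedSimplices U).Pairwise fun s t => t.1.card ≤ s.1.card := by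
  have : Std.Total fun s t : NerveSimplex U => t.1.card ≤ s.1.card :=
    ⟨fun s t => le_total t.1.card s.1.card⟩
  have : IsTrans (NerveSimplex U) fun s t => t.1.card ≤ s.1.card :=
    ⟨fun _ _ _ hst htu => htu.trans hst⟩
  exact List.pairwise_insertionSort _ _

theorem mem_flowDomain_sortedSimplices [Fintype ι] {δ : ℝ} (hδ : 0 < δ) {θ : ι → ℝ} {x : M}
    (hx : x ∈ supportInter U θ) {τ : NerveSimplex U → unitInterval}
    (hτ : ∀ s, τ s ≠ 0 → starTime δ s.1 θ ≠ 0) :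
    (x, τ) ∈ LocalContraction.flowDomain (fun s : NerveSimplex U => ⋂ j ∈ s.1, U j)
      (sortedSimplices U) := by
  have hstar (s : NerveSimplex U) (hs : τ s ≠ 0) : θ ∈ barycentricStar s.1 :=
    mem_barycentricStar_of_starTime_ne_zero hδ (hτ s hs)
  refine ⟨(pairwise_sortedSimplices U).imp fun hcard hs ht => ?_, fun s _ hs => ?_⟩
  · exact biInter_subset_biInter_left
      (subset_of_mem_barycentricStar (hstar _ hs) (hstar _ ht) hcard)
  · exact mem_iInter₂.2 fun j hj => hx j ((hstar s hs) j hj).1.ne'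

end Nerve

section Realization

variable {M : Type*} [MetricSpace M] {N : ℕ} {U : Fin N → Set M}

theorem mem_nerveSet_iff {θ : Fin N → ℝ} :
    θ ∈ NerveSet U ↔ θ ∈ stdSimplex ℝ (Fin N) ∧ (supportInter U θ).Nonempty := by
  have hinter : ⋂ j ∈ {j | θ j ≠ 0}, U j = supportInter U θ := by
    ext x
    simp [supportInter]
  constructor
  · rintro ⟨hIcc, hsum, hne⟩
    exact ⟨⟨fun j => (hIcc j).1, hsum⟩, hinter ▸ hne⟩
  · rintro ⟨hθ, hne⟩
    exact ⟨fun j => mem_Icc_of_mem_stdSimplex hθ j, hθ.2, hinter ▸ hne⟩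

theorem nerveSet_subset_stdSimplex : NerveSet U ⊆ stdSimplex ℝ (Fin N) :=
  fun _ hθ => (mem_nerveSet_iff.1 hθ).1

theorem totallyBounded_nerveSet (U : Fin N → Set M) : TotallyBounded (NerveSet U) :=
  (isCompact_stdSimplex ℝ (Fin N)).totallyBounded.subset nerveSet_subset_stdSimplex

theorem segment_subset_nerveSet {θ η : Fin N → ℝ} (hθ : θ ∈ stdSimplex ℝ (Fin N))
    (hη : η ∈ stdSimplex ℝ (Fin N)) (hne : (supportInter U θ ∩ supportInter U η).Nonempty) :
    segment ℝ θ η ⊆ NerveSet U := by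
  obtain ⟨x, hxθ, hxη⟩ := hne
  intro ρ hρ
  refine mem_nerveSet_iff.2 ⟨(convex_stdSimplex ℝ (Fin N)).segment_subset hθ hη hρ, x, ?_⟩
  obtain ⟨a, b, -, -, -, rfl⟩ := hρ
  intro j hj
  by_cases hθj : θ j = 0
  · refine hxη j fun hηj => hj ?_
    simp [hθj, hηj]
  · exact hxθ j hθj

theorem LipHomotopic.of_supportInter_inter_nonempty {X : Type*} [MetricSpace X]
    {f g : X → NerveSet U} {Kf Kg : NNReal} (hf : LipschitzWith Kf f) (hg : LipschitzWith Kg g)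
    (hfg : ∀ x, (supportInter U (f x : Fin N → ℝ) ∩ supportInter U (g x)).Nonempty) :
    LipHomotopic f g :=
  .of_segment_subset (totallyBounded_nerveSet U).isBounded hf hg fun x =>
    segment_subset_nerveSet (nerveSet_subset_stdSimplex (f x).2)
      (nerveSet_subset_stdSimplex (g x).2) (hfg x)

/-- A scale at which the points `δ`-close to a given point of the nerve run the contraction attached
to some common simplex for the full time `1`. -/
def IsNerveScale (U : Fin N → Set M) (δ : NNReal) : Prop :=
  0 < δ ∧ ∀ θ ∈ NerveSet U, ∃ s : NerveSimplex U, ∀ η, dist η θ ≤ δ → starTime δ s.1 η = 1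

theorem exists_isNerveScale (U : Fin N → Set M) : ∃ δ, IsNerveScale U δ := by
  obtain ⟨δ, hδ, hscale⟩ := exists_forall_dist_le_starTime_eq_one (Fin N)
  refine ⟨δ, hδ, fun θ hθ => ?_⟩
  obtain ⟨s, hs, hone⟩ := hscale θ (nerveSet_subset_stdSimplex hθ)
  have hstar : θ ∈ barycentricStar s := by
    refine mem_barycentricStar_of_starTime_ne_zero (NNReal.coe_pos.2 hδ) ?_
    rw [hone θ (by simp)]
    exact one_ne_zero
  obtain ⟨x, hx⟩ := (mem_nerveSet_iff.1 hθ).2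
  exact ⟨⟨s, hs, x, mem_iInter₂.2 fun j hj => hx j (hstar j hj).1.ne'⟩, hone⟩

/-- The contractions of the intersections attached to the simplices of the nerve, composed in order
of decreasing dimension and run for the times given by `θ`. -/
noncomputable def nerveFlow (G : ∀ s : NerveSimplex U, LocalContraction (⋂ j ∈ s.1, U j))
    (δ : ℝ) (x : M) (θ : Fin N → ℝ) : M :=
  LocalContraction.flow G (sortedSimplices U) (x, fun s => starTime δ s.1 θ)

variable (G : ∀ s : NerveSimplex U, LocalContraction (⋂ j ∈ s.1, U j)) {δ : NNReal}

theorem exists_lipschitzWith_nerveFlow (hδ : IsNerveScale U δ) :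
    ∃ (ζ : NerveSet U → M) (K : NNReal), LipschitzWith K ζ ∧
      ∀ θ : NerveSet U, ∀ x ∈ supportInter U θ, nerveFlow G δ x θ = ζ θ := by
  obtain ⟨K, hK⟩ := LocalContraction.exists_dist_flow_le G (sortedSimplices U)
  have hlip {θ η : NerveSet U} (hηθ : dist η θ ≤ δ) {x y : M} (hx : x ∈ supportInter U θ)
      (hy : y ∈ supportInter U η) :
      dist (nerveFlow G δ y η) (nerveFlow G δ x θ) ≤ (K * δ⁻¹ : NNReal) * dist η θ := by
    obtain ⟨s, hs⟩ := hδ.2 θ θ.2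
    have hdom {θ : NerveSet U} {x : M} (hx : x ∈ supportInter U θ) :=
      mem_flowDomain_sortedSimplices (NNReal.coe_pos.2 hδ.1) hx (fun _ h => h)
    have hreset := hK _ (hdom hy) _ (hdom hx) ⟨s, mem_sortedSimplices s, hs _ hηθ, hs _ (by simp)⟩
    refine hreset.trans ?_
    rw [NNReal.coe_mul, mul_assoc]
    gcongr
    exact (lipschitzWith_pi fun s : NerveSimplex U => lipschitzWith_starTime δ s.1).dist_le_mul _ _
  choose x hx using fun θ : NerveSet U => (mem_nerveSet_iff.1 θ.2).2
  obtain ⟨K', hK'⟩ := exists_lipschitzWith_of_dist_le (f := fun θ => nerveFlow G δ (x θ) θ)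
    (totallyBounded_nerveSet U) (NNReal.coe_pos.2 hδ.1) fun η θ hηθ => hlip hηθ (hx θ) (hx η)
  refine ⟨_, K', hK', fun θ y hy => ?_⟩
  simpa using hlip (dist_self θ |>.trans_le δ.2) (hx θ) hy

theorem supportInter_subset_supportInter_peak (hδ : IsNerveScale U δ) {θ : Fin N → ℝ}
    (hθ : θ ∈ NerveSet U) : supportInter U θ ⊆ supportInter U (peak δ θ) := by
  intro x hx j hj
  have hδ0 := NNReal.coe_pos.2 hδ.1
  obtain ⟨s, hs⟩ := hδ.2 θ hθ
  have hne : starTime δ s.1 θ ≠ 0 := (hs θ (by simp)).trans_ne one_ne_zero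
  have hjs := mem_of_peak_ne_zero hδ0 s.2.1 hne hj
  exact hx j ((mem_barycentricStar_of_starTime_ne_zero hδ0 hne) j hjs).1.ne'

theorem nerveFlow_mem_supportInter_peak (hδ : IsNerveScale U δ) {θ : Fin N → ℝ} {x : M}
    (hθ : θ ∈ NerveSet U) (hx : x ∈ supportInter U θ) :
    nerveFlow G δ x θ ∈ supportInter U (peak δ θ) := by
  have hδ0 := NNReal.coe_pos.2 hδ.1
  intro j hj
  have hactive (s : NerveSimplex U) (hs : starTime δ s.1 θ ≠ 0) : j ∈ s.1 :=
    mem_of_peak_ne_zero hδ0 s.2.1 hs hj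
  refine LocalContraction.flow_mem G
    (mem_flowDomain_sortedSimplices hδ0 hx fun _ h => h)
    (fun s _ hs => biInter_subset_of_mem (hactive s hs))
    (supportInter_subset_supportInter_peak hδ hθ hx j hj)

theorem lipHomotopic_id_of_supportInter_inter_nonempty (hδ : IsNerveScale U δ)
    {f : NerveSet U → NerveSet U} {K : NNReal} (hf : LipschitzWith K f)
    (hne : ∀ θ : NerveSet U,
      (supportInter U (f θ : Fin N → ℝ) ∩ supportInter U (peak δ θ)).Nonempty) :
    LipHomotopic f id := by
  obtain ⟨Kp, hpeak⟩ := exists_lipschitzWith_peak (ι := Fin N) hδ.1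
  have hinter (θ : NerveSet U) :
      (supportInter U (peak δ θ) ∩ supportInter U (θ : Fin N → ℝ)).Nonempty := by
    obtain ⟨x, hx⟩ := (mem_nerveSet_iff.1 θ.2).2
    exact ⟨x, supportInter_subset_supportInter_peak hδ θ.2 hx, hx⟩
  let truncate (θ : NerveSet U) : NerveSet U := ⟨peak δ θ, mem_nerveSet_iff.2
    ⟨peak_mem_stdSimplex (NNReal.coe_pos.2 hδ.1) (nerveSet_subset_stdSimplex θ.2),
      (hinter θ).left⟩⟩
  have htruncate : LipschitzWith Kp truncate := fun θ η =>
    hpeak ⟨θ, nerveSet_subset_stdSimplex θ.2⟩ ⟨η, nerveSet_subset_stdSimplex η.2⟩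
  exact (LipHomotopic.of_supportInter_inter_nonempty hf htruncate hne).trans
    (.of_supportInter_inter_nonempty htruncate .id hinter)

theorem lipHomotopic_nerveFlow {X : Type*} [MetricSpace X] {f : X → M} {g : X → NerveSet U}
    {Kf Kg : NNReal} (hδ : IsNerveScale U δ) (hf : LipschitzWith Kf f)
    (hg : LipschitzWith Kg g) (hfg : ∀ x, f x ∈ supportInter U (g x)) :
    LipHomotopic (fun x => nerveFlow G δ (f x) (g x)) f := by
  obtain ⟨K, hK⟩ := LocalContraction.exists_lipschitzOnWith_flow G (sortedSimplices U)
  let times (q : X × unitInterval) (s : NerveSimplex U) : unitInterval :=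
    min (starTime δ s.1 (g q.1)) (unitInterval.symm q.2)
  have hsymm : LipschitzWith 1 unitInterval.symm :=
    LipschitzWith.of_dist_le_mul fun s t => by
      rw [NNReal.coe_one, one_mul]
      exact (dist_sub_left (1 : ℝ) s t).le
  have hstar (s : NerveSimplex U) :=
    (lipschitzWith_starTime δ s.1).comp ((LipschitzWith.subtype_val (NerveSet U)).comp hg)
  have htimes : LipschitzWith _ times := lipschitzWith_pi fun s =>
    ((LipschitzWith.subtype_val _).comp ((hstar s).comp LipschitzWith.prod_fst)).min
      ((LipschitzWith.subtype_val _).comp (hsymm.comp LipschitzWith.prod_snd))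
  have hdom (q : X × unitInterval) : (f q.1, times q) ∈ LocalContraction.flowDomain
      (fun s : NerveSimplex U => ⋂ j ∈ s.1, U j) (sortedSimplices U) :=
    mem_flowDomain_sortedSimplices (NNReal.coe_pos.2 hδ.1) (hfg q.1) fun s hs hzero =>
      hs (by simp only [times, hzero, min_eq_left unitInterval.nonneg'])
  refine ⟨_, _, lipschitzOnWith_univ.1 (hK.comp
    ((hf.comp LipschitzWith.prod_fst).prodMk htimes).lipschitzOnWith fun q _ => hdom q),
    fun x => ?_, fun x => ?_⟩
  · simp [nerveFlow, times, unitInterval.le_one']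
  · refine LocalContraction.flow_of_forall_eq_zero G _ fun s => ?_
    simp [times]

end Realization

section CenterBump

variable {M : Type*} [PseudoMetricSpace M] {V : Set M} {p : M}

/-- The bump function `d(x, Vᶜ) / (d(x, Vᶜ) + d(x, p))` of an open set `V` centered at `p ∈ V`; it
is `0` if `V` is the whole space, since then `infDist x Vᶜ = 0`. -/
noncomputable def centerBump (V : Set M) (p x : M) : ℝ :=
  infDist x Vᶜ / (infDist x Vᶜ + dist x p)

theorem centerBump_nonneg (V : Set M) (p x : M) : 0 ≤ centerBump V p x :=
  div_nonneg infDist_nonneg (add_nonneg infDist_nonneg dist_nonneg)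

theorem mem_of_centerBump_ne_zero {x : M} (h : centerBump V p x ≠ 0) : x ∈ V := by
  by_contra hx
  exact h (by rw [centerBump, infDist_zero_of_mem hx, zero_div])

theorem exists_lipschitzWith_centerBump (hV : IsOpen V) (hp : p ∈ V) :
    ∃ K, LipschitzWith K (centerBump V p) := by
  rcases Vᶜ.eq_empty_or_nonempty with hempty | hne
  · exact ⟨0, by simp [centerBump, hempty]⟩
  have hpos : 0 < infDist p Vᶜ := (hV.isClosed_compl.notMem_iff_infDist_pos hne).1 (not_not.2 hp)
  lift infDist p Vᶜ to NNReal using infDist_nonneg with c hc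
  refine ⟨_, lipschitzWith_div_of_abs_le (lipschitz_infDist_pt Vᶜ)
    ((lipschitz_infDist_pt Vᶜ).add (LipschitzWith.dist_left p)) (fun x => ?_)
    (NNReal.coe_pos.1 hpos) fun x => ?_⟩
  · rw [abs_of_nonneg infDist_nonneg]
    exact le_add_of_nonneg_right dist_nonneg
  · rw [hc, dist_comm]
    exact infDist_le_infDist_add_dist

end CenterBump

theorem exists_lipschitzWith_of_eq_sumNormalize_centerBump {M : Type*} [MetricSpace M]
    [CompactSpace M] {N : ℕ} {U : Fin N → Set M} {p : Fin N → M} {Θ : M → NerveSet U}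
    (hU : ∀ j, IsOpen (U j)) (hp : ∀ j, p j ∈ U j)
    (hΘ : ∀ x, (Θ x : Fin N → ℝ) = sumNormalize fun j => centerBump (U j) (p j) x) :
    ∃ K, LipschitzWith K Θ := by
  choose K hK using fun j => exists_lipschitzWith_centerBump (hU j) (hp j)
  have hbump : LipschitzWith (Finset.univ.sup K) fun x j => centerBump (U j) (p j) x :=
    lipschitzWith_pi fun j => (hK j).weaken (Finset.le_sup (Finset.mem_univ j))
  have hsum (x : M) : 0 < ∑ i, centerBump (U i) (p i) x := by
    refine (Finset.sum_nonneg fun i _ => centerBump_nonneg _ _ x).lt_of_ne' fun hzero => ?_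
    have hone := (nerveSet_subset_stdSimplex (Θ x).2).2
    rw [hΘ] at hone
    simp [sumNormalize, hzero] at hone
  obtain ⟨c, hc, hcsum⟩ := isCompact_univ.exists_forall_le'
    (continuous_finsetSum _ fun i _ => (hK i).continuous).continuousOn fun x _ => hsum x
  lift c to NNReal using hc.le
  obtain ⟨K', hK'⟩ := exists_lipschitzWith_sumNormalize hbump (fun x j => centerBump_nonneg _ _ x)
    (NNReal.coe_pos.1 hc) fun x => hcsum x (mem_univ x)
  refine ⟨K', fun x y => ?_⟩
  rw [Subtype.edist_eq, hΘ, hΘ]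
  exact hK' x y

theorem theta_lipHomotopyEquiv_general {M : Type*} [MetricSpace M] {N : ℕ} (U : Fin N → Set M)
    (hU : ∀ s : Finset (Fin N), s.Nonempty → (⋂ j ∈ s, U j).Nonempty →
      IsLipContractible (⋂ j ∈ s, U j))
    (Θ : M → ↥(NerveSet U)) {K : NNReal} (hΘ : LipschitzWith K Θ)
    (hsupp : ∀ x, x ∈ supportInter U (Θ x : Fin N → ℝ)) :
    ∃ (ζ : ↥(NerveSet U) → M) (Kζ : NNReal), LipschitzWith Kζ ζ ∧
      LipHomotopic (ζ ∘ Θ) id ∧ LipHomotopic (Θ ∘ ζ) id := by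
  obtain ⟨δ, hδ⟩ := exists_isNerveScale U
  let G (s : NerveSimplex U) : LocalContraction (⋂ j ∈ s.1, U j) :=
    (hU s.1 s.2.1 s.2.2).nonempty_localContraction.some
  obtain ⟨ζ, Kζ, hζ, hflow⟩ := exists_lipschitzWith_nerveFlow G hδ
  refine ⟨ζ, Kζ, hζ, ?_, ?_⟩
  · have hζΘ : ζ ∘ Θ = fun x => nerveFlow G δ x (Θ x) :=
      funext fun x => (hflow (Θ x) x (hsupp x)).symm
    rw [hζΘ]
    exact lipHomotopic_nerveFlow G hδ .id hΘ hsupp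
  · refine lipHomotopic_id_of_supportInter_inter_nonempty hδ (hΘ.comp hζ)
      fun θ => ⟨ζ θ, hsupp _, ?_⟩
    obtain ⟨x, hx⟩ := (mem_nerveSet_iff.1 θ.2).2
    rw [← hflow θ x hx]
    exact nerveFlow_mem_supportInter_peak G hδ θ.2 hx

/-- Let `M` be a compact metric space with a finite good covering
`U_1, …, U_N` with chosen centers `p_j`, and let `ξ_j` be the associated Lipschitz
partition of unity, `ξ_j(x) = f_j(x)/Σ_i f_i(x)` with
`f_j(x) = d(x, M∖U_j)/(d(x, M∖U_j) + d(x,p_j))`.  Then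
`Θ : M → |𝒩_𝒰|`, `Θ(x) = (ξ_1(x),…,ξ_N(x))`, is a Lipschitz homotopy equivalence. -/
theorem theta_lipHomotopyEquiv {M : Type*} [MetricSpace M] [CompactSpace M]
    {N : ℕ} (U : Fin N → Set M) (hU : IsGoodCovering U)
    (p : Fin N → M) (hp : ∀ j, IsCenter (U j) (p j))
    (Θ : M → ↥(NerveSet U))
    (hΘ : ∀ (x : M) (j : Fin N), (Θ x : Fin N → ℝ) j =
      (infDist x (U j)ᶜ / (infDist x (U j)ᶜ + dist x (p j))) /
        ∑ i, infDist x (U i)ᶜ / (infDist x (U i)ᶜ + dist x (p i))) :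
    (∃ K : NNReal, LipschitzWith K Θ) ∧
    ∃ (ζ : ↥(NerveSet U) → M) (Kζ : NNReal), LipschitzWith Kζ ζ ∧
      LipHomotopic (ζ ∘ Θ) id ∧ LipHomotopic (Θ ∘ ζ) id := by
  have hnormalize (x : M) :
      (Θ x : Fin N → ℝ) = sumNormalize fun j => centerBump (U j) (p j) x := funext (hΘ x)
  have hcenter (j : Fin N) : p j ∈ U j := by
    obtain ⟨q, hq, -⟩ := hp j
    exact hq ▸ q.2
  obtain ⟨K, hK⟩ := exists_lipschitzWith_of_eq_sumNormalize_centerBump hU.1 hcenter hnormalize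
  refine ⟨⟨K, hK⟩, theta_lipHomotopyEquiv_general U
    (fun s hs hne => (hU.2.2.2.2 s hs hne).isLipContractible) Θ hK fun x j hj => ?_⟩
  rw [hnormalize] at hj
  exact mem_of_centerBump_ne_zero (left_ne_zero_of_mul hj)
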